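/- Multisymplectic conservation law for the semilinear vector (1-form) Hodge–Laplace problem in ℝ³: work on E := EuclideanSpace ℝ (Fin 3) and write ∂ᵢ f (x) := fderiv ℝ f x eᵢ for f differentiable at x; define curl, div, grad, the cross product ×₃, and scalar multiplication • as usual in coordinates ((curl F)ᵢ = ∂ⱼFₖ − ∂ₖFⱼ for cyclic (i,j,k), div F = ∑ᵢ ∂ᵢFᵢ, grad f = (∂₀f, ∂₁f, ∂₂f)). Let C : E → Matrix (Fin 3) (Fin 3) ℝ with C x symmetric, let v₁, v₂, η₁, η₂ : E → (Fin 3 → ℝ) and τ₁, τ₂ : E → ℝ, all with components differentiable at a point x, satisfying at x for i = 1, 2: − div vᵢ (x) = τᵢ x, curl vᵢ (x) = ηᵢ x, and grad τᵢ (x) + curl ηᵢ (x) = (C x).mulVec (vᵢ x). Then div (fun y => (τ₁ y) • (v₂ y) − (τ₂ y) • (v₁ y) + (v₁ y) ×₃ (η₂ y) − (v₂ y) ×₃ (η₁ y)) (x) = 0. -/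

import Mathlib

open Matrix

/-- The `i`-th partial derivative (along the `i`-th standard basis vector) of a
real-valued function on `ℝ³`. -/
noncomputable def pderiv3 (i : Fin 3) (f : EuclideanSpace ℝ (Fin 3) → ℝ)
    (x : EuclideanSpace ℝ (Fin 3)) : ℝ :=
  fderiv ℝ f x (EuclideanSpace.single i 1)

/-- The curl of a vector field on `ℝ³`: `(curl F)ᵢ = ∂ⱼFₖ − ∂ₖFⱼ` for `(i, j, k)` a
cyclic permutation of `(0, 1, 2)`. -/
noncomputable def curl3 (F : EuclideanSpace ℝ (Fin 3) → Fin 3 → ℝ)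
    (x : EuclideanSpace ℝ (Fin 3)) : Fin 3 → ℝ :=
  fun i => pderiv3 (i + 1) (fun y => F y (i + 2)) x - pderiv3 (i + 2) (fun y => F y (i + 1)) x

/-- The divergence of a vector field on `ℝ³`. -/
noncomputable def div3 (F : EuclideanSpace ℝ (Fin 3) → Fin 3 → ℝ)
    (x : EuclideanSpace ℝ (Fin 3)) : ℝ :=
  ∑ i, pderiv3 i (fun y => F y i) x

/-- The gradient of a scalar field on `ℝ³`. -/
noncomputable def grad3 (f : EuclideanSpace ℝ (Fin 3) → ℝ)
    (x : EuclideanSpace ℝ (Fin 3)) : Fin 3 → ℝ :=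
  fun i => pderiv3 i f x

/-!
The current is `J₁₂ - J₂₁`, where `J₁₂ = τ₁ v₂ - v₂ × η₁` is the flux in Green's identity for the
Hodge–Laplacian. By the product rules for `div`,
`div J₁₂ = (grad τ₁ + curl η₁) ⬝ v₂ + τ₁ div v₂ - η₁ ⬝ curl v₂`, which along first variations is
`C v₁ ⬝ v₂ - τ₁ τ₂ - η₁ ⬝ η₂`. This is symmetric under `1 ↔ 2` because `C` is.
-/

theorem differentiableAt_crossProduct {𝕜 E : Type*} [NontriviallyNormedField 𝕜] [CompleteSpace 𝕜]
    [NormedAddCommGroup E] [NormedSpace 𝕜 E] {F G : E → Fin 3 → 𝕜} {x : E}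
    (hF : DifferentiableAt 𝕜 F x) (hG : DifferentiableAt 𝕜 G x) :
    DifferentiableAt 𝕜 (fun y => F y ⨯₃ G y) x :=
  ((crossProduct (R := 𝕜)).toContinuousBilinearMap.differentiableAt.comp x hF).clm_apply hG

theorem mulVec_dotProduct_comm_of_isSymm {n R : Type*} [Fintype n] [NonUnitalCommSemiring R]
    {A : Matrix n n R} (hA : A.IsSymm) (u v : n → R) : A *ᵥ u ⬝ᵥ v = A *ᵥ v ⬝ᵥ u := by
  rw [dotProduct_comm, ← dotProduct_transpose_mulVec, hA.eq, dotProduct_comm]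

section VectorCalculus

variable {f g : EuclideanSpace ℝ (Fin 3) → ℝ} {F G : EuclideanSpace ℝ (Fin 3) → Fin 3 → ℝ}
  {x : EuclideanSpace ℝ (Fin 3)}

theorem pderiv3_sub (i : Fin 3) (hf : DifferentiableAt ℝ f x) (hg : DifferentiableAt ℝ g x) :
    pderiv3 i (fun y => f y - g y) x = pderiv3 i f x - pderiv3 i g x := by
  simp [pderiv3, fderiv_fun_sub hf hg]

theorem pderiv3_mul (i : Fin 3) (hf : DifferentiableAt ℝ f x) (hg : DifferentiableAt ℝ g x) :
    pderiv3 i (fun y => f y * g y) x = f x * pderiv3 i g x + g x * pderiv3 i f x := by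
  simp [pderiv3, fderiv_fun_mul hf hg]

theorem div3_sub (hF : DifferentiableAt ℝ F x) (hG : DifferentiableAt ℝ G x) :
    div3 (fun y => F y - G y) x = div3 F x - div3 G x := by
  simp only [div3, Pi.sub_apply, ← Finset.sum_sub_distrib]
  exact Finset.sum_congr rfl fun i _ =>
    pderiv3_sub i (differentiableAt_pi.1 hF i) (differentiableAt_pi.1 hG i)

theorem div3_smul (hf : DifferentiableAt ℝ f x) (hF : DifferentiableAt ℝ F x) :
    div3 (fun y => f y • F y) x = grad3 f x ⬝ᵥ F x + f x * div3 F x := by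
  simp only [div3, grad3, dotProduct, Pi.smul_apply, smul_eq_mul, Finset.mul_sum,
    ← Finset.sum_add_distrib]
  refine Finset.sum_congr rfl fun i _ => ?_
  rw [pderiv3_mul i hf (differentiableAt_pi.1 hF i)]
  ring

theorem div3_crossProduct (hF : DifferentiableAt ℝ F x) (hG : DifferentiableAt ℝ G x) :
    div3 (fun y => F y ⨯₃ G y) x = curl3 F x ⬝ᵥ G x - F x ⬝ᵥ curl3 G x := by
  rw [differentiableAt_pi] at hF hG
  have pderiv3_minor (i j k : Fin 3) :
      pderiv3 i (fun y => F y j * G y k - F y k * G y j) x =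
        (F x j * pderiv3 i (fun y => G y k) x + G x k * pderiv3 i (fun y => F y j) x) -
          (F x k * pderiv3 i (fun y => G y j) x + G x j * pderiv3 i (fun y => F y k) x) := by
    rw [pderiv3_sub i ((hF j).fun_mul (hG k)) ((hF k).fun_mul (hG j)),
      pderiv3_mul i (hF j) (hG k), pderiv3_mul i (hF k) (hG j)]
  simp only [div3, curl3, dotProduct, Fin.sum_univ_three, cross_apply, cons_val, pderiv3_minor,
    Fin.reduceAdd]
  ring

end VectorCalculus

section GreenFlux

variable {τ : EuclideanSpace ℝ (Fin 3) → ℝ} {η u : EuclideanSpace ℝ (Fin 3) → Fin 3 → ℝ}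
  {x : EuclideanSpace ℝ (Fin 3)}

/-- The boundary flux `τ u - u × η` in Green's identity, pairing a scalar field `τ` and the proxy
`η` of a 2-form field with a test vector field `u`; it is the proxy of `τ ∧ ⋆u - u ∧ ⋆η`. -/
def greenFlux (τ : EuclideanSpace ℝ (Fin 3) → ℝ) (η u : EuclideanSpace ℝ (Fin 3) → Fin 3 → ℝ)
    (y : EuclideanSpace ℝ (Fin 3)) : Fin 3 → ℝ :=
  τ y • u y - u y ⨯₃ η y

theorem differentiableAt_greenFlux (hτ : DifferentiableAt ℝ τ x) (hη : DifferentiableAt ℝ η x)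
    (hu : DifferentiableAt ℝ u x) : DifferentiableAt ℝ (greenFlux τ η u) x :=
  (hτ.fun_smul hu).fun_sub (differentiableAt_crossProduct hu hη)

theorem div3_greenFlux (hτ : DifferentiableAt ℝ τ x) (hη : DifferentiableAt ℝ η x)
    (hu : DifferentiableAt ℝ u x) :
    div3 (greenFlux τ η u) x =
      (grad3 τ x + curl3 η x) ⬝ᵥ u x + τ x * div3 u x - η x ⬝ᵥ curl3 u x := by
  calc div3 (greenFlux τ η u) x
    _ = div3 (fun y => τ y • u y) x - div3 (fun y => u y ⨯₃ η y) x :=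
      div3_sub (hτ.fun_smul hu) (differentiableAt_crossProduct hu hη)
    _ = grad3 τ x ⬝ᵥ u x + τ x * div3 u x - (curl3 u x ⬝ᵥ η x - u x ⬝ᵥ curl3 η x) := by
      rw [div3_smul hτ hu, div3_crossProduct hu hη]
    _ = (grad3 τ x + curl3 η x) ⬝ᵥ u x + τ x * div3 u x - η x ⬝ᵥ curl3 u x := by
      rw [add_dotProduct, dotProduct_comm (curl3 u x), dotProduct_comm (u x)]
      ring

end GreenFlux

/-- Multisymplectic conservation law for the semilinear vector (1-form) Hodge–Laplace
problem in `ℝ³`: first variations `wᵢ = (τᵢ, vᵢ, ηᵢ)` satisfying `−div vᵢ = τᵢ`,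
`curl vᵢ = ηᵢ`, `grad τᵢ + curl ηᵢ = C v` with `C x` symmetric at a point `x` obey
`div(τ₁ v₂ − τ₂ v₁ + v₁ × η₂ − v₂ × η₁) = 0` at `x`. -/
theorem vector_hodge_laplace_multisymplectic
    (C : EuclideanSpace ℝ (Fin 3) → Matrix (Fin 3) (Fin 3) ℝ)
    (hC : ∀ y, (C y).IsSymm)
    (v₁ v₂ η₁ η₂ : EuclideanSpace ℝ (Fin 3) → Fin 3 → ℝ)
    (τ₁ τ₂ : EuclideanSpace ℝ (Fin 3) → ℝ)
    (x : EuclideanSpace ℝ (Fin 3))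
    (hdv₁ : ∀ i, DifferentiableAt ℝ (fun y => v₁ y i) x)
    (hdv₂ : ∀ i, DifferentiableAt ℝ (fun y => v₂ y i) x)
    (hdη₁ : ∀ i, DifferentiableAt ℝ (fun y => η₁ y i) x)
    (hdη₂ : ∀ i, DifferentiableAt ℝ (fun y => η₂ y i) x)
    (hdτ₁ : DifferentiableAt ℝ τ₁ x)
    (hdτ₂ : DifferentiableAt ℝ τ₂ x)
    (hδ₁ : -div3 v₁ x = τ₁ x) (hδ₂ : -div3 v₂ x = τ₂ x)
    (hd₁ : curl3 v₁ x = η₁ x) (hd₂ : curl3 v₂ x = η₂ x)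
    (heq₁ : grad3 τ₁ x + curl3 η₁ x = (C x).mulVec (v₁ x))
    (heq₂ : grad3 τ₂ x + curl3 η₂ x = (C x).mulVec (v₂ x)) :
    div3 (fun y =>
      τ₁ y • v₂ y - τ₂ y • v₁ y
        + crossProduct (v₁ y) (η₂ y) - crossProduct (v₂ y) (η₁ y)) x = 0 := by
  rw [← differentiableAt_pi] at hdv₁ hdv₂ hdη₁ hdη₂
  have current_eq (y : EuclideanSpace ℝ (Fin 3)) :
      τ₁ y • v₂ y - τ₂ y • v₁ y + v₁ y ⨯₃ η₂ y - v₂ y ⨯₃ η₁ y =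
        greenFlux τ₁ η₁ v₂ y - greenFlux τ₂ η₂ v₁ y := by
    simp only [greenFlux]
    abel
  have div_flux₁₂ : div3 (greenFlux τ₁ η₁ v₂) x =
      C x *ᵥ v₁ x ⬝ᵥ v₂ x - τ₁ x * τ₂ x - η₁ x ⬝ᵥ η₂ x := by
    rw [div3_greenFlux hdτ₁ hdη₁ hdv₂, heq₁, hd₂, ← hδ₂]
    ring
  have div_flux₂₁ : div3 (greenFlux τ₂ η₂ v₁) x =
      C x *ᵥ v₂ x ⬝ᵥ v₁ x - τ₂ x * τ₁ x - η₂ x ⬝ᵥ η₁ x := by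
    rw [div3_greenFlux hdτ₂ hdη₂ hdv₁, heq₂, hd₁, ← hδ₁]
    ring
  simp only [current_eq]
  rw [div3_sub (differentiableAt_greenFlux hdτ₁ hdη₁ hdv₂)
      (differentiableAt_greenFlux hdτ₂ hdη₂ hdv₁), div_flux₁₂, div_flux₂₁,
    mulVec_dotProduct_comm_of_isSymm (hC x) (v₁ x), dotProduct_comm (η₁ x)]
  ring
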